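/- arXiv:0809.3168 — 2 statements merged into one kernel-verified Lean document; each statement's English description precedes it below -/
import Mathlib

section
/- Let n, m ≥ 1, let f_n : ℕⁿ → ℝ and g_m : ℕᵐ → ℝ be symmetric with finite support. If n ≠ m then E[J_n(f_n) J_m(g_m)] = 0, and if n = m then E[J_n(f_n) J_n(g_n)] = n! · Σ_{(i_1,…,i_n)∈Δ_n} f_n(i_1,…,i_n) g_n(i_1,…,i_n). -/
open MeasureTheory
open scoped Classical

/-- The discrete multiple stochastic integral
`J_n(f_n) = ∑_{(i_1,…,i_n) ∈ Δ_n} f_n(i_1,…,i_n) Y_{i_1} ⋯ Y_{i_n}`,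
where `Δ_n` is the set of `n`-tuples of pairwise distinct indices. -/
noncomputable def multipleInt {Ω : Type*} (Y : ℕ → Ω → ℝ) {n : ℕ}
    (f : (Fin n → ℕ) → ℝ) (ω : Ω) : ℝ :=
  ∑' i : Fin n → ℕ, if Function.Injective i then f i * ∏ j, Y (i j) ω else 0

lemma aux_bdd {Ω : Type*} (Y : ℕ → Ω → ℝ) (hYbdd : ∀ k, ∃ C : ℝ, ∀ ω, |Y k ω| ≤ C)
    (e : ℕ → ℕ) (N : ℕ) : ∃ C : ℝ, ∀ ω, |∏ k ∈ Finset.range N, Y k ω ^ e k| ≤ C := by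
  choose C hC using hYbdd
  refine ⟨∏ k ∈ Finset.range N, C k ^ e k, fun ω => ?_⟩
  rw [Finset.abs_prod]
  refine Finset.prod_le_prod (fun _ _ => abs_nonneg _) (fun k _ => ?_)
  rw [abs_pow]
  exact pow_le_pow_left₀ (abs_nonneg _) (hC k ω) _

lemma aux_int {Ω : Type*} {mΩ : MeasurableSpace Ω} (μ : Measure Ω) [IsProbabilityMeasure μ]
    (Y : ℕ → Ω → ℝ) (hYmeas : ∀ k, Measurable (Y k))
    (hYbdd : ∀ k, ∃ C : ℝ, ∀ ω, |Y k ω| ≤ C)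
    (e : ℕ → ℕ) (N : ℕ) : Integrable (fun ω => ∏ k ∈ Finset.range N, Y k ω ^ e k) μ := by
  obtain ⟨C, hC⟩ := aux_bdd Y hYbdd e N
  refine Integrable.of_bound (C := C) ?_ (Filter.Eventually.of_forall hC)
  exact (Finset.measurable_fun_prod _ (fun k _ => (hYmeas k).pow_const _)).aestronglyMeasurable

lemma aux_meas {Ω : Type*}
    (Y : ℕ → Ω → ℝ) 
    (𝓕 : ℕ → MeasurableSpace Ω)
    (h𝓕succ : ∀ n, 𝓕 (n + 1) =
      MeasurableSpace.comap (fun ω (i : Fin (n + 1)) => Y i ω) inferInstance)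
    (e : ℕ → ℕ) (N : ℕ) :
    Measurable[𝓕 N] (fun ω => ∏ k ∈ Finset.range N, Y k ω ^ e k) := by
  cases N with
  | zero => simp only [Finset.range_zero, Finset.prod_empty]; exact measurable_const
  | succ N =>
    rw [h𝓕succ]
    have h : (fun ω => ∏ k ∈ Finset.range (N+1), Y k ω ^ e k) =
      (fun x : Fin (N+1) → ℝ => ∏ k : Fin (N+1), x k ^ e k) ∘
        (fun ω (i : Fin (N + 1)) => Y i ω) := by
      funext ω
      simp [Finset.prod_range]
    rw [h]
    refine Measurable.comp ?_ (comap_measurable _)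
    fun_prop

lemma aux_pull {Ω : Type*} {mΩ : MeasurableSpace Ω} (μ : Measure Ω) [IsProbabilityMeasure μ]
    (m : MeasurableSpace Ω) (hm : m ≤ mΩ) (P X : Ω → ℝ) (c : ℝ)
    (hP : Measurable[m] P) (hX : Integrable X μ) (hPX : Integrable (P * X) μ)
    (hc : μ[X | m] =ᵐ[μ] fun _ => c) : ∫ ω, P ω * X ω ∂μ = c * ∫ ω, P ω ∂μ := by
  have h1 := condExp_mul_of_stronglyMeasurable_left (m := m) (μ := μ)
    hP.stronglyMeasurable hPX hX
  calc ∫ ω, P ω * X ω ∂μ = ∫ ω, (μ[P * X | m]) ω ∂μ := (integral_condExp hm).symm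
    _ = ∫ ω, c * P ω ∂μ := by
      apply integral_congr_ae
      filter_upwards [h1, hc] with ω h1 h2
      rw [h1, Pi.mul_apply, h2, mul_comm]
    _ = _ := integral_const_mul _ _

lemma aux_moment {Ω : Type*} {mΩ : MeasurableSpace Ω} (μ : Measure Ω) [IsProbabilityMeasure μ]
    (Y : ℕ → Ω → ℝ) (hYmeas : ∀ k, Measurable (Y k))
    (hYbdd : ∀ k, ∃ C : ℝ, ∀ ω, |Y k ω| ≤ C)
    (𝓕 : ℕ → MeasurableSpace Ω)
    (h𝓕succ : ∀ n, 𝓕 (n + 1) =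
      MeasurableSpace.comap (fun ω (i : Fin (n + 1)) => Y i ω) inferInstance)
    (h𝓕le : ∀ n, 𝓕 n ≤ mΩ)
    (hY0 : ∀ n, μ[Y n | 𝓕 n] =ᵐ[μ] 0)
    (hY1 : ∀ n, μ[fun ω => (Y n ω) ^ 2 | 𝓕 n] =ᵐ[μ] fun _ => 1)
    (e : ℕ → ℕ) (he : ∀ k, e k ≤ 2) (N : ℕ) :
    ∫ ω, ∏ k ∈ Finset.range N, Y k ω ^ e k ∂μ = if ∀ k < N, e k ≠ 1 then 1 else 0 := by
  have hYi : ∀ k p, Integrable (fun ω => Y k ω ^ p) μ := by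
    intro k p
    obtain ⟨C, hC⟩ := hYbdd k
    refine Integrable.of_bound (C := C ^ p) ((hYmeas k).pow_const _).aestronglyMeasurable
      (Filter.Eventually.of_forall fun ω => ?_)
    rw [norm_pow]
    exact pow_le_pow_left₀ (norm_nonneg _) (hC ω) _
  induction N with
  | zero => simp
  | succ N ih =>
    have key : ∫ ω, ∏ k ∈ Finset.range (N+1), Y k ω ^ e k ∂μ
        = (if e N = 1 then 0 else 1) * ∫ ω, ∏ k ∈ Finset.range N, Y k ω ^ e k ∂μ := by
      have hI := aux_int μ Y hYmeas hYbdd e (N+1)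
      simp only [Finset.prod_range_succ] at hI ⊢
      refine aux_pull μ (𝓕 N) (h𝓕le N) _ (fun ω => Y N ω ^ e N) _
        (aux_meas Y 𝓕 h𝓕succ e N) (hYi N _) hI ?_
      have := he N
      interval_cases h : e N
      · simp [condExp_const (h𝓕le N)]
      · simp only [pow_one, if_true]; exact hY0 N
      · simpa using hY1 N
    rw [key, ih]
    simp only [Nat.lt_succ_iff_lt_or_eq, or_imp, forall_and, forall_eq]
    by_cases h : e N = 1 <;> simp [h]

lemma aux_prod {Ω : Type*} (Y : ℕ → Ω → ℝ) (S T : Finset ℕ) (N : ℕ)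
    (hS : S ⊆ Finset.range N) (hT : T ⊆ Finset.range N) (ω : Ω) :
    (∏ k ∈ S, Y k ω) * ∏ k ∈ T, Y k ω =
      ∏ k ∈ Finset.range N, Y k ω ^ ((if k ∈ S then 1 else 0) + (if k ∈ T then 1 else 0)) := by
  have h : ∀ S ⊆ Finset.range N, ∏ k ∈ S, Y k ω =
      ∏ k ∈ Finset.range N, Y k ω ^ (if k ∈ S then 1 else 0) := by
    intro S hS
    rw [← Finset.prod_subset hS]
    · exact Finset.prod_congr rfl (fun k hk => by simp [hk])
    · intro k _ hk; simp [hk]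
  rw [h S hS, h T hT, ← Finset.prod_mul_distrib]
  exact Finset.prod_congr rfl (fun k _ => (pow_add _ _ _).symm)

lemma aux_sets {Ω : Type*} {mΩ : MeasurableSpace Ω} (μ : Measure Ω) [IsProbabilityMeasure μ]
    (Y : ℕ → Ω → ℝ) (hYmeas : ∀ k, Measurable (Y k))
    (hYbdd : ∀ k, ∃ C : ℝ, ∀ ω, |Y k ω| ≤ C)
    (𝓕 : ℕ → MeasurableSpace Ω)
    (h𝓕succ : ∀ n, 𝓕 (n + 1) =
      MeasurableSpace.comap (fun ω (i : Fin (n + 1)) => Y i ω) inferInstance)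
    (h𝓕le : ∀ n, 𝓕 n ≤ mΩ)
    (hY0 : ∀ n, μ[Y n | 𝓕 n] =ᵐ[μ] 0)
    (hY1 : ∀ n, μ[fun ω => (Y n ω) ^ 2 | 𝓕 n] =ᵐ[μ] fun _ => 1)
    (S T : Finset ℕ) :
    Integrable (fun ω => (∏ k ∈ S, Y k ω) * ∏ k ∈ T, Y k ω) μ ∧
    ∫ ω, (∏ k ∈ S, Y k ω) * ∏ k ∈ T, Y k ω ∂μ = if S = T then 1 else 0 := by
  obtain ⟨N, hN⟩ := Finset.exists_nat_subset_range (S ∪ T)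
  have hS : S ⊆ Finset.range N := Finset.subset_union_left.trans hN
  have hT : T ⊆ Finset.range N := Finset.subset_union_right.trans hN
  simp only [aux_prod Y S T N hS hT]
  refine ⟨aux_int μ Y hYmeas hYbdd _ N, ?_⟩
  rw [aux_moment μ Y hYmeas hYbdd 𝓕 h𝓕succ h𝓕le hY0 hY1 _
    (fun k => by split_ifs <;> simp) N]
  congr 1
  apply propext
  constructor
  · intro h
    ext k
    by_cases hk : k < N
    · have := h k hk
      by_cases h1 : k ∈ S <;> by_cases h2 : k ∈ T <;> simp_all
    · have h1 : k ∉ S := fun h => hk (Finset.mem_range.1 (hS h))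
      have h2 : k ∉ T := fun h => hk (Finset.mem_range.1 (hT h))
      simp [h1, h2]
  · rintro rfl k _
    split_ifs <;> simp

lemma aux_J {Ω : Type*} (Y : ℕ → Ω → ℝ) {n : ℕ}
    (f : (Fin n → ℕ) → ℝ) (hf : (Function.support f).Finite) (ω : Ω) :
    multipleInt Y f ω = ∑ i ∈ hf.toFinset,
      (if Function.Injective i then f i else 0) * ∏ k ∈ Finset.univ.image i, Y k ω := by
  unfold multipleInt
  rw [tsum_eq_sum (s := hf.toFinset)]
  · refine Finset.sum_congr rfl fun i _ => ?_
    by_cases h : Function.Injective i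
    · simp only [h, if_true]
      rw [Finset.prod_image (fun a _ b _ hab => h hab)]
    · simp [h]
  · intro i hi
    have : f i = 0 := by simpa using hi
    simp [this]

lemma aux_count {n : ℕ} (g : (Fin n → ℕ) → ℝ)
    (hgsymm : ∀ (σ : Equiv.Perm (Fin n)) (i : Fin n → ℕ), g (i ∘ σ) = g i)
    (hg : (Function.support g).Finite) (i : Fin n → ℕ) (hi : Function.Injective i) :
    ∑ j ∈ hg.toFinset, (if Function.Injective j then g j else 0) *
      (if Finset.univ.image i = Finset.univ.image j then (1 : ℝ) else 0)
      = (Nat.factorial n : ℝ) * g i := by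
  rw [← tsum_eq_sum (L := .unconditional _)]
  swap
  · intro j hj
    have : g j = 0 := by simpa using hj
    simp [this]
  rw [tsum_eq_sum (s := (Finset.univ : Finset (Equiv.Perm (Fin n))).image (fun σ : Equiv.Perm (Fin n) => i ∘ σ))]
  · rw [Finset.sum_image]
    · have : ∀ σ : Equiv.Perm (Fin n), (if Function.Injective (i ∘ σ) then g (i ∘ σ) else 0) *
        (if Finset.univ.image i = Finset.univ.image (i ∘ σ) then (1 : ℝ) else 0) = g i := by
        intro σ
        have h1 : Function.Injective (i ∘ σ) := hi.comp σ.injective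
        have h2 : Finset.univ.image i = Finset.univ.image (i ∘ σ) := by
          rw [← Finset.image_image, Finset.image_univ_equiv]
        rw [if_pos h1, if_pos h2, hgsymm, mul_one]
      simp only [this]
      simp [Fintype.card_perm]
    · intro σ _ τ _ h
      ext k
      exact congrArg _ (hi (congrFun h k))
  · intro j hj
    by_contra hne
    apply hj
    have h1 : Function.Injective j := by
      by_contra h; simp [h] at hne
    have h2 : Finset.univ.image i = Finset.univ.image j := by
      by_contra h; simp [h] at hne
    have h3 : ∀ k, ∃ l, i l = j k := by
      intro k
      have : j k ∈ Finset.univ.image i := by rw [h2]; simp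
      simpa using this
    choose s hs using h3
    have hsi : Function.Injective s := fun a b hab => h1 (by rw [← hs, ← hs, hab])
    refine Finset.mem_image.2 ⟨Equiv.ofBijective s (Finite.injective_iff_bijective.1 hsi),
      Finset.mem_univ _, ?_⟩
    funext k
    exact hs k

/-- **Isometry and orthogonality of multiple stochastic integrals.**
`𝓕 n` plays the role of the σ-algebra `𝓕_{n-1}` of the paper.  For symmetric finitely
supported `f_n : ℕⁿ → ℝ`, `g_m : ℕᵐ → ℝ` with `n, m ≥ 1`:
if `n ≠ m` then `E[J_n(f_n) J_m(g_m)] = 0`, and if `n = m` then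
`E[J_n(f_n) J_n(g_n)] = n! ∑_{(i_1,…,i_n) ∈ Δ_n} f_n(i_1,…,i_n) g_n(i_1,…,i_n)`. -/
theorem multipleInt_isometry
    {Ω : Type*} {mΩ : MeasurableSpace Ω} (μ : Measure Ω) [IsProbabilityMeasure μ]
    (Y : ℕ → Ω → ℝ) (hYmeas : ∀ k, Measurable (Y k))
    (hYbdd : ∀ k, ∃ C : ℝ, ∀ ω, |Y k ω| ≤ C)
    (𝓕 : ℕ → MeasurableSpace Ω)
    (h𝓕0 : 𝓕 0 = ⊥)
    (h𝓕succ : ∀ n, 𝓕 (n + 1) =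
      MeasurableSpace.comap (fun ω (i : Fin (n + 1)) => Y i ω) inferInstance)
    (h𝓕le : ∀ n, 𝓕 n ≤ mΩ)
    (hY0 : ∀ n, μ[Y n | 𝓕 n] =ᵐ[μ] 0)
    (hY1 : ∀ n, μ[fun ω => (Y n ω) ^ 2 | 𝓕 n] =ᵐ[μ] fun _ => 1)
    (n m : ℕ) (hn : 1 ≤ n) (hm : 1 ≤ m)
    (f : (Fin n → ℕ) → ℝ) (g : (Fin m → ℕ) → ℝ)
    (hfsymm : ∀ (σ : Equiv.Perm (Fin n)) (i : Fin n → ℕ), f (i ∘ σ) = f i)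
    (hgsymm : ∀ (σ : Equiv.Perm (Fin m)) (i : Fin m → ℕ), g (i ∘ σ) = g i)
    (hffin : (Function.support f).Finite)
    (hgfin : (Function.support g).Finite) :
    (n ≠ m → ∫ ω, multipleInt Y f ω * multipleInt Y g ω ∂μ = 0) ∧
      ∀ (h : n = m),
        ∫ ω, multipleInt Y f ω * multipleInt Y g ω ∂μ
          = (Nat.factorial n : ℝ) * ∑' i : Fin n → ℕ,
              if Function.Injective i then f i * g (fun j => i (Fin.cast h.symm j)) else 0 := by
  have hset := aux_sets μ Y hYmeas hYbdd 𝓕 h𝓕succ h𝓕le hY0 hY1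
  have key : ∫ ω, multipleInt Y f ω * multipleInt Y g ω ∂μ =
      ∑ i ∈ hffin.toFinset, (if Function.Injective i then f i else 0) *
        ∑ j ∈ hgfin.toFinset, (if Function.Injective j then g j else 0) *
          (if Finset.univ.image i = Finset.univ.image j then (1 : ℝ) else 0) := by
    have e : ∀ ω, multipleInt Y f ω * multipleInt Y g ω =
        ∑ i ∈ hffin.toFinset, ∑ j ∈ hgfin.toFinset,
          ((if Function.Injective i then f i else 0) * (if Function.Injective j then g j else 0)) *
          ((∏ k ∈ Finset.univ.image i, Y k ω) * ∏ k ∈ Finset.univ.image j, Y k ω) := by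
      intro ω
      rw [aux_J Y f hffin, aux_J Y g hgfin, Finset.sum_mul_sum]
      exact Finset.sum_congr rfl fun i _ => Finset.sum_congr rfl fun j _ => by ring
    simp only [e]
    rw [integral_finsetSum _ (fun i _ => integrable_finsetSum _
      (fun j _ => (hset _ _).1.const_mul _))]
    refine Finset.sum_congr rfl fun i _ => ?_
    rw [integral_finsetSum _ (fun j _ => (hset _ _).1.const_mul _), Finset.mul_sum]
    refine Finset.sum_congr rfl fun j _ => ?_
    rw [integral_const_mul, (hset _ _).2, mul_assoc]
  rw [key]
  constructor
  · intro hnm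
    refine Finset.sum_eq_zero fun i _ => ?_
    by_cases hi : Function.Injective i
    swap
    · simp [hi]
    refine mul_eq_zero_of_right _ (Finset.sum_eq_zero fun j _ => ?_)
    by_cases hj : Function.Injective j
    swap
    · simp [hj]
    rw [if_neg (c := _ = _), mul_zero]
    intro h
    apply hnm
    have := congrArg Finset.card h
    rwa [Finset.card_image_of_injective _ hi, Finset.card_image_of_injective _ hj,
      Finset.card_univ, Finset.card_univ, Fintype.card_fin, Fintype.card_fin] at this
  · intro h
    subst h
    rw [tsum_eq_sum (s := hffin.toFinset), Finset.mul_sum]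
    · refine Finset.sum_congr rfl fun i _ => ?_
      by_cases hi : Function.Injective i
      · rw [aux_count g hgsymm hgfin i hi, if_pos hi, if_pos hi]
        simp only [Fin.cast_eq_self]
        ring
      · simp [hi]
    · intro i hi
      have : f i = 0 := by simpa using hi
      simp [this]
end

section
/- For all real numbers p with 0 ≤ p ≤ 1, q = 1 − p, and all t, a ∈ ℝ: p·t·e^t + q·a·e^a − (p·e^t + q·e^a)·log(p·e^t + q·e^a) ≤ p·q·( q·e^a·((t−a)·e^{t−a} − e^{t−a} + 1) + p·e^t·((a−t)·e^{a−t} − e^{a−t} + 1) ). -/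
open Real in
lemma aux_pos (p : ℝ) (hp0 : 0 ≤ p) (hp1 : p ≤ 1) (s : ℝ) : 0 < p * exp s + (1 - p) := by
  have := exp_pos s
  rcases hp0.eq_or_lt with h | h
  · subst h; norm_num
  · have := mul_pos h this
    linarith

open Real in
lemma aux_H (p : ℝ) (hp0 : 0 ≤ p) (hp1 : p ≤ 1) :
    Monotone (fun s : ℝ => (1-p)^2 * s + p*(1-p)*(1 - exp (-s)) - s
      + log (p * exp s + (1 - p))) := by
  have hd : ∀ s : ℝ, HasDerivAt (fun s : ℝ => (1-p)^2 * s + p*(1-p)*(1 - exp (-s)) - s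
      + log (p * exp s + (1 - p)))
      ((1-p)^2 * 1 + p*(1-p)*(-(exp (-s) * (-1))) - 1
        + (p * exp s) / (p * exp s + (1 - p))) s := by
    intro s
    have h1 : HasDerivAt (fun s : ℝ => exp (-s)) (exp (-s) * (-1)) s := (hasDerivAt_neg s).exp
    have h2 := (((hasDerivAt_exp s).const_mul p).add_const (1-p)).log (aux_pos p hp0 hp1 s).ne'
    exact ((((hasDerivAt_id s).const_mul ((1-p)^2)).add
      ((h1.const_sub 1).const_mul (p*(1-p)))).sub (hasDerivAt_id s)).add h2
  refine monotone_of_deriv_nonneg (fun s => (hd s).differentiableAt) (fun s => ?_)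
  rw [(hd s).deriv, exp_neg]
  have hm := aux_pos p hp0 hp1 s
  have hx := exp_pos s
  have : (1-p)^2 * 1 + p*(1-p)*(-((exp s)⁻¹ * (-1))) - 1
        + (p * exp s) / (p * exp s + (1 - p))
      = p * (1-p)^2 * (exp s - 1)^2 / (exp s * (p * exp s + (1 - p))) := by
    have := hm.ne'
    field_simp
    ring
  rw [this]
  positivity

open Real in
lemma aux_F (p : ℝ) (hp0 : 0 ≤ p) (hp1 : p ≤ 1) (s : ℝ) :
    0 ≤ p*(1-p)*((1-p)*(s * exp s - exp s + 1) + p * (exp s - 1 - s))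
      - (p * (s * exp s) - (p * exp s + (1-p)) * log (p * exp s + (1-p))) := by
  set F : ℝ → ℝ := fun s => p*(1-p)*((1-p)*(s * exp s - exp s + 1) + p * (exp s - 1 - s))
      - (p * (s * exp s) - (p * exp s + (1-p)) * log (p * exp s + (1-p))) with hF
  have hH := aux_H p hp0 hp1
  have hd : ∀ s : ℝ, HasDerivAt F (p * exp s * ((1-p)^2 * s + p*(1-p)*(1 - exp (-s)) - s
      + log (p * exp s + (1 - p)))) s := by
    intro s
    have hm := aux_pos p hp0 hp1 s
    have he := hasDerivAt_exp s
    have h0 := (hasDerivAt_id s).mul he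
    have h1 := (he.const_mul p).add_const (1-p)
    have h2 := h1.mul (h1.log hm.ne')
    have h3 := (((((h0.sub he).add_const 1).const_mul (1-p)).add
      (((he.sub_const 1).sub (hasDerivAt_id s)).const_mul p)).const_mul (p*(1-p))).sub
      ((h0.const_mul p).sub h2)
    refine h3.congr_deriv ?_
    have := hm.ne'
    have hx := (exp_pos s).ne'
    rw [exp_neg]
    simp only [id]
    field_simp
    ring
  have hdiff : Differentiable ℝ F := fun s => (hd s).differentiableAt
  have hF0 : F 0 = 0 := by simp [hF]
  change 0 ≤ F s
  rw [← hF0]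
  rcases le_total 0 s with h | h
  · refine monotoneOn_of_deriv_nonneg (convex_Ici 0) hdiff.continuous.continuousOn
      hdiff.differentiableOn (fun x hx => ?_) (Set.mem_Ici.2 le_rfl) (Set.mem_Ici.2 h) h
    rw [(hd x).deriv]
    rw [interior_Ici] at hx
    have := hH (le_of_lt hx)
    simp at this
    exact mul_nonneg (by positivity) (by simpa using this)
  · refine antitoneOn_of_deriv_nonpos (convex_Iic 0) hdiff.continuous.continuousOn
      hdiff.differentiableOn (fun x hx => ?_) (Set.mem_Iic.2 h) (Set.mem_Iic.2 le_rfl) h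
    rw [(hd x).deriv]
    rw [interior_Iic] at hx
    have := hH (le_of_lt hx)
    simp at this
    exact mul_nonpos_of_nonneg_of_nonpos (by positivity) (by simpa using this)

/-- **One-dimensional sharp logarithmic Sobolev lemma.**  For `0 ≤ p ≤ 1`, `q = 1 - p`
and all `t, a ∈ ℝ`:
`p t e^t + q a e^a - (p e^t + q e^a) log(p e^t + q e^a)
  ≤ p q (q e^a ((t-a) e^{t-a} - e^{t-a} + 1) + p e^t ((a-t) e^{a-t} - e^{a-t} + 1))`. -/
theorem one_dim_sharp_log_sobolev_ineq
    (p q t a : ℝ) (hp0 : 0 ≤ p) (hp1 : p ≤ 1) (hq : q = 1 - p) :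
    p * t * Real.exp t + q * a * Real.exp a
        - (p * Real.exp t + q * Real.exp a) * Real.log (p * Real.exp t + q * Real.exp a)
      ≤ p * q *
          (q * Real.exp a * ((t - a) * Real.exp (t - a) - Real.exp (t - a) + 1)
            + p * Real.exp t * ((a - t) * Real.exp (a - t) - Real.exp (a - t) + 1)) := by
  subst hq
  obtain ⟨s, rfl⟩ : ∃ s, t = s + a := ⟨t - a, by ring⟩
  have hm := aux_pos p hp0 hp1 s
  have hF := mul_nonneg (Real.exp_pos a).le (aux_F p hp0 hp1 s)
  have e1 : p * Real.exp (s + a) + (1 - p) * Real.exp a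
      = (p * Real.exp s + (1 - p)) * Real.exp a := by rw [Real.exp_add]; ring
  have e2 : s + a - a = s := by ring
  have e3 : a - (s + a) = -s := by ring
  rw [e1, Real.log_mul hm.ne' (Real.exp_pos a).ne', Real.log_exp, e2, e3, Real.exp_add]
  have e4 : Real.exp s * Real.exp (-s) = 1 := by rw [← Real.exp_add]; simp
  have e5 : p * (Real.exp s * Real.exp a) * (-s * Real.exp (-s) - Real.exp (-s) + 1)
      = p * Real.exp a * (Real.exp s - 1 - s) := by
    linear_combination (p * Real.exp a * (-s - 1)) * e4
  rw [e5]
  linarith [hF]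
end
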